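/- arXiv:2405.09367 — 2 statements merged into one kernel-verified Lean document; each statement's English description precedes it below -/
import Mathlib

section
/- Let r ≥ 1 be an integer, e_0 < e_1 < ⋯ < e_r and z real numbers, and suppose there is an index j₀ with e_{j₀} < 0 ≤ e_{j₀+1}. Let f_L and f_R be continuous on a neighborhood of z with f_L(z) ≠ f_R(z), and define f(x) = f_L(x) for x < z and f(x) = f_R(x) for x ≥ z. Then the smoothness indicator I(h) = Σ_{j=0}^{r−1} ((f(z + e_{j+1}·h) − f(z + e_j·h))/(e_{j+1} − e_j))² converges, as h → 0⁺, to the strictly positive limit ((f_R(z) − f_L(z))/(e_{j₀+1} − e_{j₀}))². -/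
/-!
A node with `e j < 0` approaches `z` from the left and a node with `0 ≤ e j` stays in `[z, ∞)`, so
the values at the nodes tend to the one-sided limits of `f` at `z`. Two consecutive nodes on the
same side have values with the same limit; only the cell `[e j₀, e (j₀ + 1)]` straddling the jump
contributes to the limit of the indicator.
-/

open Filter Topology

section PiecewiseLimits

variable {α β : Type*} [Preorder α] [DecidableLT α] [TopologicalSpace α] {z : α}
  {l : Filter β} {g k : α → β}

theorem tendsto_ite_lt_nhdsLT (hg : Tendsto g (𝓝[<] z) l) :
    Tendsto (fun x => if x < z then g x else k x) (𝓝[<] z) l :=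
  tendsto_nhdsWithin_congr (fun _ hx => (if_pos hx).symm) hg

theorem tendsto_ite_lt_nhdsGE (hk : Tendsto k (𝓝[≥] z) l) :
    Tendsto (fun x => if x < z then g x else k x) (𝓝[≥] z) l :=
  tendsto_nhdsWithin_congr (fun _ hx => (if_neg (not_lt_of_ge hx)).symm) hk

end PiecewiseLimits

section Indicator

variable {K : Type*} [Field K]

/-- The smoothness indicator `I(h)` of `f` on the stencil of nodes `z + e j * h`, `j ≤ r`. Following
the paper, the increments are divided by `e (j + 1) - e j`, without the factor `h`. -/
def smoothnessIndicator (f : K → K) (e : ℕ → K) (r : ℕ) (z h : K) : K :=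
  ∑ j ∈ Finset.range r, ((f (z + e (j + 1) * h) - f (z + e j * h)) / (e (j + 1) - e j)) ^ 2

theorem tendsto_smoothnessIndicator [TopologicalSpace K] [IsTopologicalRing K] {f : K → K}
    {e : ℕ → K} {r : ℕ} {z : K} {l : Filter K} {v : ℕ → K}
    (hv : ∀ j ≤ r, Tendsto (fun h => f (z + e j * h)) l (𝓝 (v j))) :
    Tendsto (smoothnessIndicator f e r z) l
      (𝓝 (∑ j ∈ Finset.range r, ((v (j + 1) - v j) / (e (j + 1) - e j)) ^ 2)) :=
  tendsto_finsetSum _ fun j hj =>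
    have hjr : j < r := Finset.mem_range.mp hj
    (((hv (j + 1) hjr).sub (hv j hjr.le)).div_const _).pow 2

end Indicator

theorem sum_range_sq_sub_div_ite_lt {K : Type*} [DivisionRing K] {r j₀ : ℕ} (hj₀ : j₀ < r) (a b : K)
    (d : ℕ → K) :
    ∑ j ∈ Finset.range r,
        (((if j₀ < j + 1 then b else a) - (if j₀ < j then b else a)) / d j) ^ 2 =
      ((b - a) / d j₀) ^ 2 := by
  rw [Finset.sum_eq_single_of_mem j₀ (Finset.mem_range.mpr hj₀)]
  · simp
  · intro j _ hne
    have same_side : j₀ < j + 1 ↔ j₀ < j := by omega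
    simp [same_side]

theorem tendsto_add_mul_nhds_zero {R : Type*} [Semiring R] [TopologicalSpace R]
    [IsTopologicalSemiring R] (z c : R) : Tendsto (fun h => z + c * h) (𝓝 0) (𝓝 z) :=
  Continuous.tendsto' (by fun_prop) 0 z (by simp)

section OrderedField

variable {K : Type*} [Field K] [LinearOrder K] [IsStrictOrderedRing K] [TopologicalSpace K]
  [OrderTopology K]

theorem tendsto_add_mul_nhdsGT_zero_nhdsLT (z : K) {c : K} (hc : c < 0) :
    Tendsto (fun h => z + c * h) (𝓝[>] 0) (𝓝[<] z) :=
  tendsto_nhdsWithin_iff.mpr ⟨(tendsto_add_mul_nhds_zero z c).mono_left nhdsWithin_le_nhds,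
    eventually_mem_nhdsWithin.mono fun _ hh => add_lt_of_neg_right z (mul_neg_of_neg_of_pos hc hh)⟩

theorem tendsto_add_mul_nhdsGT_zero_nhdsGE (z : K) {c : K} (hc : 0 ≤ c) :
    Tendsto (fun h => z + c * h) (𝓝[>] 0) (𝓝[≥] z) :=
  tendsto_nhdsWithin_iff.mpr ⟨(tendsto_add_mul_nhds_zero z c).mono_left nhdsWithin_le_nhds,
    eventually_mem_nhdsWithin.mono fun _ hh =>
      le_add_of_nonneg_right (mul_nonneg hc (le_of_lt hh))⟩

variable {e : ℕ → K} {r j₀ : ℕ} {z : K}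

theorem tendsto_stencil_value_at_jump {X : Type*} [TopologicalSpace X] {f : K → X} {a b : X}
    (he : MonotoneOn e (Set.Iic r)) (hj₀ : j₀ < r) (hneg : e j₀ < 0) (hnonneg : 0 ≤ e (j₀ + 1))
    (ha : Tendsto f (𝓝[<] z) (𝓝 a)) (hb : Tendsto f (𝓝[≥] z) (𝓝 b)) {j : ℕ} (hj : j ≤ r) :
    Tendsto (fun h => f (z + e j * h)) (𝓝[>] 0) (𝓝 (if j₀ < j then b else a)) := by
  split_ifs with hlt
  · have hle : e (j₀ + 1) ≤ e j :=
      he (Set.mem_Iic.mpr (Nat.succ_le_of_lt hj₀)) (Set.mem_Iic.mpr hj) (Nat.succ_le_of_lt hlt)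
    exact hb.comp (tendsto_add_mul_nhdsGT_zero_nhdsGE z (hnonneg.trans hle))
  · have hle : e j ≤ e j₀ := he (Set.mem_Iic.mpr hj) (Set.mem_Iic.mpr hj₀.le) (not_lt.mp hlt)
    exact ha.comp (tendsto_add_mul_nhdsGT_zero_nhdsLT z (hle.trans_lt hneg))

theorem stmt_5_general {f : K → K} {a b : K} (he : StrictMonoOn e (Set.Iic r)) (hj₀ : j₀ < r)
    (hneg : e j₀ < 0) (hnonneg : 0 ≤ e (j₀ + 1)) (ha : Tendsto f (𝓝[<] z) (𝓝 a))
    (hb : Tendsto f (𝓝[≥] z) (𝓝 b)) (hjump : a ≠ b) :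
    0 < ((b - a) / (e (j₀ + 1) - e j₀)) ^ 2 ∧
      Tendsto (smoothnessIndicator f e r z) (𝓝[>] 0)
        (𝓝 (((b - a) / (e (j₀ + 1) - e j₀)) ^ 2)) := by
  constructor
  · have hstep : e (j₀ + 1) - e j₀ ≠ 0 := sub_ne_zero.mpr (hneg.trans_le hnonneg).ne'
    exact sq_pos_of_ne_zero (div_ne_zero (sub_ne_zero.mpr hjump.symm) hstep)
  · rw [← sum_range_sq_sub_div_ite_lt hj₀ a b fun j => e (j + 1) - e j]
    exact tendsto_smoothnessIndicator (v := fun j => if j₀ < j then b else a) fun j hj =>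
      tendsto_stencil_value_at_jump he.monotoneOn hj₀ hneg hnonneg ha hb hj

end OrderedField

/-- **Smoothness indicator at a jump.** If the stencil `z + eⱼ h` crosses a jump of `f` at `z`
(with `e_{j₀} < 0 ≤ e_{j₀+1}`), the smoothness indicator converges as `h → 0⁺` to the strictly
positive limit `((f_R(z) - f_L(z))/(e_{j₀+1} - e_{j₀}))²`. -/
theorem stmt_5 (r : ℕ) (hr : 1 ≤ r) (e : ℕ → ℝ)
    (he : ∀ i j : ℕ, i < j → j ≤ r → e i < e j)
    (z : ℝ) (j₀ : ℕ) (hj₀ : j₀ ≤ r - 1)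
    (hej : e j₀ < 0) (hej' : 0 ≤ e (j₀ + 1))
    (fL fR f : ℝ → ℝ) (U : Set ℝ) (hU : U ∈ nhds z)
    (hfL : ContinuousOn fL U) (hfR : ContinuousOn fR U)
    (hjump : fL z ≠ fR z)
    (hf : ∀ x : ℝ, f x = if x < z then fL x else fR x) :
    0 < ((fR z - fL z) / (e (j₀ + 1) - e j₀)) ^ 2 ∧
      Filter.Tendsto
        (fun h : ℝ =>
          ∑ j ∈ Finset.range r,
            ((f (z + e (j + 1) * h) - f (z + e j * h)) / (e (j + 1) - e j)) ^ 2)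
        (nhdsWithin 0 (Set.Ioi 0))
        (nhds (((fR z - fL z) / (e (j₀ + 1) - e j₀)) ^ 2)) := by
  have hf_eq : f = fun x => if x < z then fL x else fR x := funext hf
  have hleft : Tendsto f (𝓝[<] z) (𝓝 (fL z)) :=
    hf_eq ▸ tendsto_ite_lt_nhdsLT ((hfL.continuousAt hU).tendsto.mono_left nhdsWithin_le_nhds)
  have hright : Tendsto f (𝓝[≥] z) (𝓝 (fR z)) :=
    hf_eq ▸ tendsto_ite_lt_nhdsGE ((hfR.continuousAt hU).tendsto.mono_left nhdsWithin_le_nhds)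
  exact stmt_5_general (fun i _ j hj hij => he i j hij hj) (by omega) hej hej' hleft hright hjump
end

section
/- Assume the WENO weight setup with f of class C^∞ on a neighborhood of z having a critical point of exact order k at z with 0 ≤ k ≤ R−2, and assume that either R ≥ 5, or k is even, or c_j + c_{j+1} ≠ 0 for every 0 ≤ j ≤ R−2. Then for every ε > 0 and h > 0 the weights satisfy 0 ≤ ω_{R,i,h} ≤ 1 and Σ_{i=0}^{r'} ω_{R,i,h} = 1, and there exist C > 0 and h₀ > 0 such that for every ε > 0, every 0 < h < h₀ and every 0 ≤ i ≤ r': |ω_{R,i,h} − 1/(r'+1)| ≤ C·h^{2s(R−2−k)}. -/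
/-- Simple smoothness indicator `I_{R,i,h}` on the nonuniform stencil `x_{i,h} = z + cᵢ h`,
with `r = ⌊(R-1)/2⌋`. -/
noncomputable def wenoI (R : ℕ) (c : ℕ → ℝ) (z : ℝ) (f : ℝ → ℝ) (i : ℕ) (h : ℝ) : ℝ :=
  ∑ j ∈ Finset.Ico i (i + (R - 1) / 2),
    ((f (z + c (j + 1) * h) - f (z + c j * h)) / (c (j + 1) - c j)) ^ 2

/-- Squared undivided difference `d_{R,h}` of `f` on the full stencil. -/
noncomputable def wenoD (R : ℕ) (c : ℕ → ℝ) (z : ℝ) (f : ℝ → ℝ) (h : ℝ) : ℝ :=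
  (((R - 1).factorial : ℝ) *
      ∑ i ∈ Finset.range R,
        f (z + c i * h) / ∏ j ∈ (Finset.range R).erase i, (c i - c j)) ^ 2

/-- Unnormalized WENO weight `α_{R,i,h}`, with `r' = ⌈(R-1)/2⌉ = R/2` (ℕ-division). -/
noncomputable def wenoAlpha (R : ℕ) (c : ℕ → ℝ) (z : ℝ) (f : ℝ → ℝ) (s : ℕ) (ε : ℝ)
    (i : ℕ) (h : ℝ) : ℝ :=
  (1 / (((R / 2 : ℕ) : ℝ) + 1)) *
    (1 + (wenoD R c z f h) ^ s / ((wenoI R c z f i h) ^ s + ε))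

/-- Normalized WENO weight `ω_{R,i,h}`. -/
noncomputable def wenoOmega (R : ℕ) (c : ℕ → ℝ) (z : ℝ) (f : ℝ → ℝ) (s : ℕ) (ε : ℝ)
    (i : ℕ) (h : ℝ) : ℝ :=
  wenoAlpha R c z f s ε i h / ∑ j ∈ Finset.range (R / 2 + 1), wenoAlpha R c z f s ε j h

/-- Global average weight `ω_{R,h}`. -/
noncomputable def wenoOmegaG (R : ℕ) (c : ℕ → ℝ) (z : ℝ) (f : ℝ → ℝ) (s : ℕ) (ε : ℝ)
    (h : ℝ) : ℝ :=
  1 / (1 + (wenoD R c z f h) ^ s *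
        ∑ i ∈ Finset.range (R / 2 + 1), 1 / ((wenoI R c z f i h) ^ s + ε))

/-! Taylor expansion at `z` gives `d = O(h^{2(R-1)})`, because divided differences kill
polynomials of degree less than `R - 1`, and `h^{2(k+1)} = O(I_i)`, because at a critical point of
order `k` the difference of `f` along a pair of nodes `p, q` has leading term
`(q^{k+1} - p^{k+1}) h^{k+1}`, up to a nonzero factor. Hence `d^s ≤ C h^{2s(R-2-k)} I_i^s`, so the
perturbation `d^s / (I_i^s + ε)` of the equal weights is at most `C h^{2s(R-2-k)}`, whatever `ε`
is. -/

open Filter Topology Asymptotics Finset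

section Taylor

variable {E ι : Type*} [NormedAddCommGroup E] [NormedSpace ℝ E] {f : ℝ → E} {z : ℝ} {n : ℕ}

theorem taylor_isLittleO_of_contDiffAt (hf : ContDiffAt ℝ n f z) :
    (fun x ↦ f x - taylorWithinEval f n Set.univ z x) =o[𝓝 z] fun x ↦ (x - z) ^ n := by
  obtain ⟨u, hu, hfu⟩ := hf.contDiffOn le_rfl (by simp)
  obtain ⟨δ, hδ, hball⟩ := Metric.mem_nhds_iff.1 (by simpa using hu : u ∈ 𝓝 z)
  have hz : z ∈ Metric.ball z δ := Metric.mem_ball_self hδ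
  have htaylor := taylor_isLittleO (convex_ball z δ) hz (hfu.mono hball)
  rw [Metric.isOpen_ball.nhdsWithin_eq hz] at htaylor
  simpa only [taylor_within_apply, iteratedDerivWithin_univ,
    iteratedDerivWithin_of_isOpen Metric.isOpen_ball hz] using htaylor

theorem isLittleO_sub_taylor_add_mul (hf : ContDiffAt ℝ n f z) (a : ℝ) :
    (fun h ↦ f (z + a * h) -
        ∑ j ∈ range (n + 1), ((j.factorial : ℝ)⁻¹ * (a * h) ^ j) • iteratedDeriv j f z)
      =o[𝓝 0] fun h ↦ h ^ n := by
  have hlim : Tendsto (fun h : ℝ ↦ z + a * h) (𝓝 0) (𝓝 z) :=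
    Continuous.tendsto' (by fun_prop) _ _ (by simp)
  have hscale : (fun h : ℝ ↦ (z + a * h - z) ^ n) =O[𝓝 0] fun h ↦ h ^ n := by
    simpa only [add_sub_cancel_left, mul_pow] using
      (isBigO_refl (fun h : ℝ ↦ h ^ n) _).const_mul_left (a ^ n)
  simpa only [Function.comp_def, taylor_within_apply, iteratedDerivWithin_univ,
    add_sub_cancel_left] using
    ((taylor_isLittleO_of_contDiffAt hf).comp_tendsto hlim).trans_isBigO hscale

theorem isLittleO_sum_smul_sub_leading (hf : ContDiffAt ℝ n f z) (s : Finset ι) (w c : ι → ℝ)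
    (hlow : ∀ j < n, iteratedDeriv j f z = 0 ∨ ∑ i ∈ s, w i * c i ^ j = 0) :
    (fun h ↦ ∑ i ∈ s, w i • f (z + c i * h) -
        ((n.factorial : ℝ)⁻¹ * (∑ i ∈ s, w i * c i ^ n) * h ^ n) • iteratedDeriv n f z)
      =o[𝓝 0] fun h ↦ h ^ n := by
  have hsum := IsLittleO.fun_sum fun i (_ : i ∈ s) ↦
    (isLittleO_sub_taylor_add_mul hf (c i)).const_smul_left (w i)
  refine hsum.congr_left fun h ↦ ?_
  have hpoly : ∑ i ∈ s, w i •
        ∑ j ∈ range (n + 1), ((j.factorial : ℝ)⁻¹ * (c i * h) ^ j) • iteratedDeriv j f z =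
      ∑ j ∈ range (n + 1),
        ((j.factorial : ℝ)⁻¹ * (∑ i ∈ s, w i * c i ^ j) * h ^ j) • iteratedDeriv j f z := by
    simp only [smul_sum, smul_smul, mul_sum, sum_mul, sum_smul]
    rw [sum_comm]
    refine sum_congr rfl fun j _ ↦ sum_congr rfl fun i _ ↦ ?_
    ring_nf
  have hvanish : ∀ j ∈ range n,
      ((j.factorial : ℝ)⁻¹ * (∑ i ∈ s, w i * c i ^ j) * h ^ j) • iteratedDeriv j f z = 0 := by
    intro j hj
    rcases hlow j (mem_range.1 hj) with hj | hj <;> simp [hj]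
  simp only [Pi.smul_apply, smul_sub, sum_sub_distrib, hpoly]
  rw [sum_range_succ, sum_eq_zero hvanish, zero_add]

theorem isBigO_sum_smul_of_moments_eq_zero (hf : ContDiffAt ℝ n f z) (s : Finset ι) (w c : ι → ℝ)
    (hmoments : ∀ j < n, ∑ i ∈ s, w i * c i ^ j = 0) :
    (fun h ↦ ∑ i ∈ s, w i • f (z + c i * h)) =O[𝓝 0] fun h ↦ h ^ n := by
  have hleading : (fun h : ℝ ↦
      ((n.factorial : ℝ)⁻¹ * (∑ i ∈ s, w i * c i ^ n) * h ^ n) • iteratedDeriv n f z)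
      =O[𝓝 0] fun h ↦ h ^ n := by
    simpa using ((isBigO_refl (fun h : ℝ ↦ h ^ n) (𝓝 0)).const_mul_left
      ((n.factorial : ℝ)⁻¹ * ∑ i ∈ s, w i * c i ^ n)).smul
      (isBigO_const_const (iteratedDeriv n f z) (one_ne_zero (α := ℝ)) (𝓝 0))
  simpa using (isLittleO_sum_smul_sub_leading hf s w c fun j hj ↦ .inr (hmoments j hj)).isBigO.add
    hleading

end Taylor

theorem sum_pow_div_prod_sub_eq_zero {ι F : Type*} [DecidableEq ι] [Field F] {s : Finset ι}
    {c : ι → F} (hc : Set.InjOn c s) {j : ℕ} (hj : j + 1 < #s) :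
    ∑ i ∈ s, c i ^ j / ∏ l ∈ s.erase i, (c i - c l) = 0 := by
  have hcoeff := Lagrange.coeff_eq_sum hc (P := (Polynomial.X ^ j : Polynomial F)) <| by
    rw [Polynomial.degree_X_pow]
    exact_mod_cast (by omega : j < #s)
  rw [Polynomial.coeff_X_pow, if_neg (by omega)] at hcoeff
  simpa only [Polynomial.eval_pow, Polynomial.eval_X] using hcoeff.symm

/-- `z` is a critical point of `f` of exact order `k`: the derivatives of orders `1, …, k` vanish at
`z` and the next one does not. The order `k = 0` means that `z` is not critical. -/
structure IsCriticalPointOfOrder (f : ℝ → ℝ) (z : ℝ) (k : ℕ) : Prop where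
  iteratedDeriv_eq_zero : ∀ j, 1 ≤ j → j ≤ k → iteratedDeriv j f z = 0
  iteratedDeriv_succ_ne_zero : iteratedDeriv (k + 1) f z ≠ 0

theorem IsCriticalPointOfOrder.isBigO_pow_sub {f : ℝ → ℝ} {z : ℝ} {k : ℕ}
    (hcrit : IsCriticalPointOfOrder f z k) (hf : ContDiffAt ℝ (k + 1 : ℕ) f z) {p q : ℝ}
    (hpq : q ^ (k + 1) ≠ p ^ (k + 1)) :
    (fun h ↦ h ^ (k + 1)) =O[𝓝 0] fun h ↦ f (z + q * h) - f (z + p * h) := by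
  have hlow : ∀ j < k + 1, iteratedDeriv j f z = 0 ∨
      ∑ i : Fin 2, ![1, -1] i * ![q, p] i ^ j = 0 := by
    rintro (_ | j) hj
    · simp
    · exact .inl (hcrit.iteratedDeriv_eq_zero _ (by omega) (by omega))
  set L : ℝ := ((k + 1).factorial : ℝ)⁻¹ * (q ^ (k + 1) - p ^ (k + 1)) * iteratedDeriv (k + 1) f z
  have hL : L ≠ 0 := mul_ne_zero (mul_ne_zero (by positivity) (sub_ne_zero.2 hpq))
    hcrit.iteratedDeriv_succ_ne_zero
  have hlittleO : (fun h ↦ f (z + q * h) - f (z + p * h) - L * h ^ (k + 1))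
      =o[𝓝 0] fun h ↦ h ^ (k + 1) := by
    refine (isLittleO_sum_smul_sub_leading hf univ ![1, -1] ![q, p] hlow).congr_left fun h ↦ ?_
    simp only [L, smul_eq_mul, Fin.sum_univ_two, Matrix.cons_val_zero, Matrix.cons_val_one,
      Matrix.cons_val_fin_one]
    ring
  have hequiv : (fun h ↦ f (z + q * h) - f (z + p * h)) ~[𝓝 0] fun h ↦ L * h ^ (k + 1) :=
    hlittleO.trans_isBigO (isBigO_self_const_mul hL _ _)
  exact (isBigO_self_const_mul hL _ _).trans hequiv.isBigO_symm

theorem pow_succ_ne_pow_succ {α : Type*} [Ring α] [LinearOrder α] [IsStrictOrderedRing α]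
    {a b : α} {k : ℕ} (hab : a ≠ b) (h : Even k ∨ b + a ≠ 0) :
    a ^ (k + 1) ≠ b ^ (k + 1) := by
  intro heq
  rcases pow_eq_pow_iff_cases.1 heq with hk | hab' | ⟨hneg, heven⟩
  · omega
  · exact hab hab'
  · rcases h with hk | hsum
    · exact Nat.not_even_iff_odd.2 hk.add_one heven
    · exact hsum (by rw [hneg, add_neg_cancel])

-- A critical point of odd order cannot distinguish the nodes `-a, a`, but of two consecutive pairs
-- of nodes at most one is symmetric about `0`.
theorem exists_mem_Ico_pow_succ_ne {R : ℕ} (hR : 3 ≤ R) {c : ℕ → ℝ}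
    (hc : Set.InjOn c (range R)) {k : ℕ}
    (hexc : 5 ≤ R ∨ Even k ∨ ∀ j ≤ R - 2, c j + c (j + 1) ≠ 0) {i : ℕ} (hi : i ≤ R / 2) :
    ∃ j ∈ Ico i (i + (R - 1) / 2), c (j + 1) ^ (k + 1) ≠ c j ^ (k + 1) := by
  have hne {a b : ℕ} (ha : a < R) (hb : b < R) (hab : a ≠ b) : c a ≠ c b :=
    hc.ne (by simpa using ha) (by simpa using hb) hab
  obtain ⟨j, hj, hjk⟩ : ∃ j ∈ Ico i (i + (R - 1) / 2), Even k ∨ c j + c (j + 1) ≠ 0 := by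
    rcases hexc with hR5 | hk | hc0
    · by_cases hsymm : c i + c (i + 1) = 0
      · refine ⟨i + 1, mem_Ico.2 (by omega), .inr fun hsymm' ↦ ?_⟩
        exact hne (a := i) (b := i + 1 + 1) (by omega) (by omega) (by omega) (by linarith)
      · exact ⟨i, mem_Ico.2 (by omega), .inr hsymm⟩
    · exact ⟨i, mem_Ico.2 (by omega), .inl hk⟩
    · exact ⟨i, mem_Ico.2 (by omega), .inr (hc0 i (by omega))⟩
  have hj' := mem_Ico.1 hj
  exact ⟨j, hj, pow_succ_ne_pow_succ (hne (by omega) (by omega) (by omega)) hjk⟩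

theorem abs_one_add_div_sum_sub_inv_card_le {ι 𝕜 : Type*} [Field 𝕜] [LinearOrder 𝕜]
    [IsStrictOrderedRing 𝕜] {s : Finset ι} {x : ι → 𝕜} {K : 𝕜} (hx : ∀ j ∈ s, 0 ≤ x j)
    (hxK : ∀ j ∈ s, x j ≤ K) {i : ι} (hi : i ∈ s) :
    |(1 + x i) / ∑ j ∈ s, (1 + x j) - 1 / #s| ≤ K := by
  have hK : 0 ≤ K := (hx i hi).trans (hxK i hi)
  have hcard : (1 : 𝕜) ≤ #s := by exact_mod_cast card_pos.2 ⟨i, hi⟩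
  have hcard_pos : (0 : 𝕜) < #s := zero_lt_one.trans_le hcard
  have hsum : ∑ j ∈ s, (1 + x j) = #s + ∑ j ∈ s, x j := by simp [sum_add_distrib]
  have hsum_one : 1 ≤ ∑ j ∈ s, (1 + x j) := hsum ▸ hcard.trans (by simpa using sum_nonneg hx)
  have hsum_pos := zero_lt_one.trans_le hsum_one
  have hdiff : (1 + x i) / ∑ j ∈ s, (1 + x j) - 1 / #s =
      (∑ j ∈ s, (x i - x j)) / (#s * ∑ j ∈ s, (1 + x j)) := by
    rw [div_sub_div _ _ hsum_pos.ne' hcard_pos.ne', mul_comm (#s : 𝕜), hsum]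
    simp only [sum_sub_distrib, sum_const, nsmul_eq_mul]
    ring
  have hnum : |∑ j ∈ s, (x i - x j)| ≤ #s * K := by
    simpa using (abs_sum_le_sum_abs _ s).trans <| sum_le_card_nsmul s _ K fun j hj ↦
      abs_sub_le_of_nonneg_of_le (hx i hi) (hxK i hi) (hx j hj) (hxK j hj)
  calc |(1 + x i) / ∑ j ∈ s, (1 + x j) - 1 / #s|
      = |∑ j ∈ s, (x i - x j)| / (#s * ∑ j ∈ s, (1 + x j)) := by
        rw [hdiff, abs_div, abs_of_pos (mul_pos hcard_pos hsum_pos)]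
    _ ≤ #s * K / (#s * ∑ j ∈ s, (1 + x j)) := by gcongr
    _ = K / ∑ j ∈ s, (1 + x j) := mul_div_mul_left _ _ hcard_pos.ne'
    _ ≤ K := div_le_self hK hsum_one

section Weights

variable (R : ℕ) (c : ℕ → ℝ) (z : ℝ) (f : ℝ → ℝ)

theorem wenoI_nonneg (i : ℕ) (h : ℝ) : 0 ≤ wenoI R c z f i h :=
  sum_nonneg fun _ _ ↦ sq_nonneg _

theorem wenoD_nonneg (h : ℝ) : 0 ≤ wenoD R c z f h :=
  sq_nonneg _

variable (s : ℕ) {ε : ℝ}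

theorem wenoD_pow_div_nonneg (hε : 0 < ε) (i : ℕ) (h : ℝ) :
    0 ≤ wenoD R c z f h ^ s / (wenoI R c z f i h ^ s + ε) := by
  have := wenoI_nonneg R c z f i h
  have := wenoD_nonneg R c z f h
  positivity

theorem wenoAlpha_pos (hε : 0 < ε) (i : ℕ) (h : ℝ) : 0 < wenoAlpha R c z f s ε i h := by
  have := wenoD_pow_div_nonneg R c z f s hε i h
  unfold wenoAlpha
  positivity

theorem sum_wenoAlpha_pos (hε : 0 < ε) (h : ℝ) :
    0 < ∑ j ∈ range (R / 2 + 1), wenoAlpha R c z f s ε j h :=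
  sum_pos (fun j _ ↦ wenoAlpha_pos R c z f s hε j h) nonempty_range_add_one

theorem wenoOmega_nonneg (hε : 0 < ε) (i : ℕ) (h : ℝ) : 0 ≤ wenoOmega R c z f s ε i h :=
  div_nonneg (wenoAlpha_pos R c z f s hε i h).le (sum_wenoAlpha_pos R c z f s hε h).le

theorem sum_wenoOmega (hε : 0 < ε) (h : ℝ) :
    ∑ i ∈ range (R / 2 + 1), wenoOmega R c z f s ε i h = 1 := by
  simp only [wenoOmega]
  rw [← sum_div, div_self (sum_wenoAlpha_pos R c z f s hε h).ne']

theorem wenoOmega_le_one (hε : 0 < ε) {i : ℕ} (hi : i ≤ R / 2) (h : ℝ) :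
    wenoOmega R c z f s ε i h ≤ 1 :=
  (single_le_sum (fun j _ ↦ wenoOmega_nonneg R c z f s hε j h)
    (mem_range_succ_iff.2 hi)).trans_eq (sum_wenoOmega R c z f s hε h)

theorem wenoOmega_eq (i : ℕ) (h : ℝ) :
    wenoOmega R c z f s ε i h =
      (1 + wenoD R c z f h ^ s / (wenoI R c z f i h ^ s + ε)) /
        ∑ j ∈ range (R / 2 + 1), (1 + wenoD R c z f h ^ s / (wenoI R c z f j h ^ s + ε)) := by
  unfold wenoOmega wenoAlpha
  rw [← mul_sum, mul_div_mul_left _ _ (by positivity)]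

variable {R c z f s}

theorem abs_wenoOmega_sub_le (hε : 0 < ε) {h K : ℝ} (hK : 0 ≤ K)
    (hD : ∀ i ≤ R / 2, wenoD R c z f h ^ s ≤ K * wenoI R c z f i h ^ s) {i : ℕ} (hi : i ≤ R / 2) :
    |wenoOmega R c z f s ε i h - 1 / (((R / 2 : ℕ) : ℝ) + 1)| ≤ K := by
  have hratio : ∀ j ∈ range (R / 2 + 1),
      wenoD R c z f h ^ s / (wenoI R c z f j h ^ s + ε) ≤ K := fun j hj ↦ by
    have := pow_nonneg (wenoI_nonneg R c z f j h) s
    rw [div_le_iff₀ (by positivity)]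
    exact (hD j (mem_range_succ_iff.1 hj)).trans (by gcongr; linarith)
  simpa [wenoOmega_eq] using abs_one_add_div_sum_sub_inv_card_le
    (fun j _ ↦ wenoD_pow_div_nonneg R c z f s hε j h) hratio (mem_range_succ_iff.2 hi)

end Weights

section Asymptotics

variable {R : ℕ} {c : ℕ → ℝ} {z : ℝ} {f : ℝ → ℝ} {k : ℕ}

theorem wenoD_isBigO (hc : Set.InjOn c (range R)) (hf : ContDiffAt ℝ (R - 1 : ℕ) f z) :
    wenoD R c z f =O[𝓝 0] fun h ↦ (h ^ (R - 1)) ^ 2 := by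
  have hmoments : ∀ j < R - 1,
      ∑ i ∈ range R, (∏ l ∈ (range R).erase i, (c i - c l))⁻¹ * c i ^ j = 0 := fun j hj ↦ by
    simpa only [div_eq_inv_mul] using
      sum_pow_div_prod_sub_eq_zero hc (j := j) (by rw [card_range]; omega)
  have hdd := isBigO_sum_smul_of_moments_eq_zero hf (range R) _ c hmoments
  simp only [smul_eq_mul, ← div_eq_inv_mul] at hdd
  exact (hdd.const_mul_left _).pow 2

theorem IsCriticalPointOfOrder.isBigO_wenoI (hcrit : IsCriticalPointOfOrder f z k)
    (hf : ContDiffAt ℝ (k + 1 : ℕ) f z) {i : ℕ}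
    (hi : ∃ j ∈ Ico i (i + (R - 1) / 2), c (j + 1) ^ (k + 1) ≠ c j ^ (k + 1)) :
    (fun h ↦ (h ^ (k + 1)) ^ 2) =O[𝓝 0] wenoI R c z f i := by
  obtain ⟨j, hj, hne⟩ := hi
  have hc : c (j + 1) - c j ≠ 0 := sub_ne_zero.2 fun heq ↦ hne (by rw [heq])
  have hslope : (fun h ↦ h ^ (k + 1)) =O[𝓝 0]
      fun h ↦ (f (z + c (j + 1) * h) - f (z + c j * h)) / (c (j + 1) - c j) := by
    simpa only [div_eq_inv_mul] using
      (hcrit.isBigO_pow_sub hf hne).trans (isBigO_self_const_mul (inv_ne_zero hc) _ _)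
  refine (hslope.pow 2).trans (isBigO_of_le _ fun h ↦ ?_)
  rw [Real.norm_of_nonneg (sq_nonneg _), Real.norm_of_nonneg (wenoI_nonneg R c z f i h)]
  exact single_le_sum
    (f := fun j ↦ ((f (z + c (j + 1) * h) - f (z + c j * h)) / (c (j + 1) - c j)) ^ 2)
    (fun _ _ ↦ sq_nonneg _) hj

theorem IsCriticalPointOfOrder.wenoD_pow_isBigO (hcrit : IsCriticalPointOfOrder f z k)
    (hk : k + 1 ≤ R - 1) (hc : Set.InjOn c (range R)) (hf : ContDiffAt ℝ (R - 1 : ℕ) f z) {i : ℕ}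
    (hi : ∃ j ∈ Ico i (i + (R - 1) / 2), c (j + 1) ^ (k + 1) ≠ c j ^ (k + 1)) (s : ℕ) :
    (fun h ↦ wenoD R c z f h ^ s) =O[𝓝 0]
      fun h ↦ h ^ (2 * s * (R - 2 - k)) * wenoI R c z f i h ^ s := by
  have hsplit (h : ℝ) : (h ^ (R - 1)) ^ 2 = (h ^ (R - 2 - k)) ^ 2 * (h ^ (k + 1)) ^ 2 := by
    rw [← mul_pow, ← pow_add]
    congr 2
    omega
  have hI := hcrit.isBigO_wenoI (hf.of_le (by exact_mod_cast hk)) hi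
  have hD := (wenoD_isBigO hc hf).congr_right hsplit
  refine ((hD.trans ((isBigO_refl _ _).mul hI)).pow s).congr_right fun h ↦ ?_
  rw [mul_pow, ← pow_mul, ← pow_mul]
  ring_nf

theorem IsCriticalPointOfOrder.exists_eventually_wenoD_pow_le
    (hcrit : IsCriticalPointOfOrder f z k) (hk : k + 1 ≤ R - 1) (hc : Set.InjOn c (range R))
    (hf : ContDiffAt ℝ (R - 1 : ℕ) f z)
    (hne : ∀ i ≤ R / 2, ∃ j ∈ Ico i (i + (R - 1) / 2), c (j + 1) ^ (k + 1) ≠ c j ^ (k + 1))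
    (s : ℕ) :
    ∃ C > 0, ∀ᶠ h in 𝓝 0, ∀ i ≤ R / 2,
      wenoD R c z f h ^ s ≤ C * h ^ (2 * s * (R - 2 - k)) * wenoI R c z f i h ^ s := by
  have hbound : ∀ᶠ C in atTop, ∀ i ∈ range (R / 2 + 1), ∀ᶠ h in 𝓝 0,
      ‖wenoD R c z f h ^ s‖ ≤ C * ‖h ^ (2 * s * (R - 2 - k)) * wenoI R c z f i h ^ s‖ :=
    (eventually_all_finset _).2 fun i hi ↦ isBigO_iff_eventually.1 <|
      hcrit.wenoD_pow_isBigO hk hc hf (hne i (mem_range_succ_iff.1 hi)) s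
  obtain ⟨C, hC, hC0⟩ := (hbound.and (eventually_gt_atTop 0)).exists
  refine ⟨C, hC0, ((eventually_all_finset _).2 hC).mono fun h hh i hi ↦ ?_⟩
  have hpow : 0 ≤ h ^ (2 * s * (R - 2 - k)) := (even_two.mul_right s |>.mul_right _).pow_nonneg h
  have hI := pow_nonneg (wenoI_nonneg R c z f i h) s
  have hD := pow_nonneg (wenoD_nonneg R c z f h) s
  have hle := hh i (mem_range_succ_iff.2 hi)
  rwa [Real.norm_of_nonneg hD, Real.norm_of_nonneg (mul_nonneg hpow hI), ← mul_assoc] at hle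

end Asymptotics

theorem stmt_7_general (R : ℕ) (c : ℕ → ℝ) (hc : Set.InjOn c (range R))
    (z : ℝ) (f : ℝ → ℝ) (hf : ContDiffAt ℝ (R - 1 : ℕ) f z)
    (k : ℕ) (hk : k + 1 ≤ R - 1) (hcrit : IsCriticalPointOfOrder f z k)
    (hne : ∀ i ≤ R / 2, ∃ j ∈ Ico i (i + (R - 1) / 2), c (j + 1) ^ (k + 1) ≠ c j ^ (k + 1))
    (s : ℕ) :
    (∀ ε > (0 : ℝ), ∀ h : ℝ, 0 < h → ∀ i ≤ R / 2,
        0 ≤ wenoOmega R c z f s ε i h ∧ wenoOmega R c z f s ε i h ≤ 1) ∧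
    (∀ ε > (0 : ℝ), ∀ h : ℝ, 0 < h →
        ∑ i ∈ range (R / 2 + 1), wenoOmega R c z f s ε i h = 1) ∧
    ∃ C > (0 : ℝ), ∃ h₀ > (0 : ℝ), ∀ ε > (0 : ℝ), ∀ h : ℝ, 0 < h → h < h₀ →
      ∀ i ≤ R / 2,
        |wenoOmega R c z f s ε i h - 1 / (((R / 2 : ℕ) : ℝ) + 1)|
          ≤ C * h ^ (2 * s * (R - 2 - k)) := by
  refine ⟨fun ε hε h _ i hi ↦ ⟨wenoOmega_nonneg R c z f s hε i h,
    wenoOmega_le_one R c z f s hε hi h⟩, fun ε hε h _ ↦ sum_wenoOmega R c z f s hε h, ?_⟩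
  obtain ⟨C, hC, hbound⟩ := hcrit.exists_eventually_wenoD_pow_le hk hc hf hne s
  obtain ⟨h₀, hh₀, hball⟩ := Metric.eventually_nhds_iff.1 hbound
  refine ⟨C, hC, h₀, hh₀, fun ε hε h hh hlt i hi ↦ ?_⟩
  have hdist : dist h 0 < h₀ := by rwa [Real.dist_0_eq_abs, abs_of_pos hh]
  exact abs_wenoOmega_sub_le hε (by positivity) (hball hdist) hi

/-- **Normalized weights in the smooth case.** Under the smooth critical-point setup, the
weights `ω_{R,i,h}` lie in `[0,1]`, sum to `1`, and satisfy
`ω_{R,i,h} = 1/(r'+1) + O(h^{2s(R-2-k)})`, uniformly in `ε > 0`. -/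
theorem stmt_7 (R : ℕ) (hR : 3 ≤ R) (c : ℕ → ℝ)
    (hc : ∀ i j : ℕ, i < j → j < R → c i < c j)
    (z : ℝ) (f : ℝ → ℝ) (U : Set ℝ) (hU : U ∈ nhds z)
    (hf : ContDiffOn ℝ (⊤ : ℕ∞) f U)
    (k : ℕ) (hk : k ≤ R - 2)
    (hcrit : ∀ j : ℕ, 1 ≤ j → j ≤ k → iteratedDeriv j f z = 0)
    (hk1 : iteratedDeriv (k + 1) f z ≠ 0)
    (hexc : 5 ≤ R ∨ Even k ∨ ∀ j : ℕ, j ≤ R - 2 → c j + c (j + 1) ≠ 0)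
    (s : ℕ) (hs : 1 ≤ s) :
    (∀ ε > (0 : ℝ), ∀ h : ℝ, 0 < h → ∀ i ≤ R / 2,
        0 ≤ wenoOmega R c z f s ε i h ∧ wenoOmega R c z f s ε i h ≤ 1) ∧
    (∀ ε > (0 : ℝ), ∀ h : ℝ, 0 < h →
        ∑ i ∈ Finset.range (R / 2 + 1), wenoOmega R c z f s ε i h = 1) ∧
    ∃ C > (0 : ℝ), ∃ h₀ > (0 : ℝ), ∀ ε > (0 : ℝ), ∀ h : ℝ, 0 < h → h < h₀ →
      ∀ i ≤ R / 2,
        |wenoOmega R c z f s ε i h - 1 / (((R / 2 : ℕ) : ℝ) + 1)|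
          ≤ C * h ^ (2 * s * (R - 2 - k)) := by
  have hinj : Set.InjOn c (range R) := by
    rw [coe_range]
    exact StrictMonoOn.injOn fun i _ j hj hij ↦ hc i j hij hj
  exact stmt_7_general R c hinj z f (contDiffAt_infty.1 (hf.contDiffAt hU) _) k
    (by omega) ⟨hcrit, hk1⟩ (fun _ ↦ exists_mem_Ico_pow_succ_ne hR hinj hexc) s
end
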